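/- For every integer N ≥ 2, every λ > 0, and every admissible Ψ whose energy satisfies ℰ_{λ,N}(Ψ) ≤ (λ/2) N (N−1) ŵ(0), one has the explicit bound ⟨𝒩₊⟩_Ψ ≤ λ N ( w(0) − ŵ(0) ) / ( 2 (2π)² ). -/

import Mathlib

open MeasureTheory Real

noncomputable section

/-- The unit cube `[0,1]^{dN}` in the configuration space of `N` particles in `ℝ^d`. -/
def cube (d N : ℕ) : Set (Fin N → Fin d → ℝ) :=
  Set.univ.pi fun _ => Set.univ.pi fun _ => Set.Icc (0 : ℝ) 1

/-- The unit cube `[0,1]^d` in `ℝ^d`. -/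
def cube1 (d : ℕ) : Set (Fin d → ℝ) :=
  Set.univ.pi fun _ => Set.Icc (0 : ℝ) 1

/-- `Ψ` is admissible: smooth, `ℤ^d`-periodic in each particle variable, symmetric under
permutations of the particles, and `L²`-normalized on the unit cube. -/
def IsAdmissible (d N : ℕ) (Ψ : (Fin N → Fin d → ℝ) → ℂ) : Prop :=
  ContDiff ℝ (⊤ : ℕ∞) Ψ ∧
  (∀ (x : Fin N → Fin d → ℝ) (j : Fin N) (v : Fin d → ℤ),
      Ψ (Function.update x j (x j + fun i => (v i : ℝ))) = Ψ x) ∧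
  (∀ (σ : Equiv.Perm (Fin N)) (x : Fin N → Fin d → ℝ), Ψ (x ∘ σ) = Ψ x) ∧
  (∫ x in cube d N, ‖Ψ x‖ ^ 2) = 1

/-- The energy `ℰ_{λ,N}(Ψ)` of a wave function `Ψ`. -/
def energy (d N : ℕ) (lam : ℝ) (w : (Fin d → ℝ) → ℝ)
    (Ψ : (Fin N → Fin d → ℝ) → ℂ) : ℝ :=
  ∫ x in cube d N,
    ((∑ j : Fin N, ∑ i : Fin d, ‖fderiv ℝ Ψ x (Pi.single j (Pi.single i 1))‖ ^ 2) +
      lam * (∑ j : Fin N, ∑ k : Fin N, if j < k then w (x j - x k) else 0) * ‖Ψ x‖ ^ 2)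

/-- The ground state energy `E(λ,N)`. -/
def GSE (d N : ℕ) (lam : ℝ) (w : (Fin d → ℝ) → ℝ) : ℝ :=
  sInf {e | ∃ Ψ, IsAdmissible d N Ψ ∧ energy d N lam w Ψ = e}

/-- The interaction potential defined by the absolutely convergent Fourier series
`w(x) = ∑_{p ∈ (2πℤ)^d} ŵ(p) e^{ip·x}`, with the lattice point `p = 2πk` indexed by
`k ∈ ℤ^d`. -/
def wOf (d : ℕ) (hw : (Fin d → ℤ) → ℝ) (x : Fin d → ℝ) : ℝ :=
  (∑' k : Fin d → ℤ,
    (hw k : ℂ) * Complex.exp (Complex.I * ((∑ i, (2 * π * (k i : ℝ)) * x i : ℝ) : ℂ))).re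

/-- `|p|²` for the lattice point `p = 2πk`. -/
def pSq (d : ℕ) (k : Fin d → ℤ) : ℝ := ∑ i, (2 * π * (k i : ℝ)) ^ 2

/-- The elementary excitation energy `e_p = √(|p|⁴ + 2|p|²ŵ(p))`. -/
def ePk (d : ℕ) (hw : (Fin d → ℤ) → ℝ) (k : Fin d → ℤ) : ℝ :=
  Real.sqrt (pSq d k ^ 2 + 2 * pSq d k * hw k)

/-- The Bogoliubov coefficient `α_p = ŵ(p)/(|p|² + ŵ(p) + e_p)`. -/
def alphaP (d : ℕ) (hw : (Fin d → ℤ) → ℝ) (k : Fin d → ℤ) : ℝ :=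
  hw k / (pSq d k + hw k + ePk d hw k)

/-- The Bogoliubov ground state energy
`e_B = -(1/2) ∑_{p ≠ 0} (|p|² + ŵ(p) - e_p)`. -/
def eB (d : ℕ) (hw : (Fin d → ℤ) → ℝ) : ℝ :=
  -(1 / 2) * ∑' k : {k : Fin d → ℤ // k ≠ 0}, (pSq d k.1 + hw k.1 - ePk d hw k.1)

/-- The projection `Q_j` removing the condensate in the `j`-th variable. -/
def Qop (d N : ℕ) (j : Fin N) (Ψ : (Fin N → Fin d → ℝ) → ℂ) :
    (Fin N → Fin d → ℝ) → ℂ :=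
  fun x => Ψ x - ∫ y in cube1 d, Ψ (Function.update x j y)

/-- The expected number of excited particles `⟨𝒩₊⟩_Ψ`. -/
def NplusExp (d N : ℕ) (Ψ : (Fin N → Fin d → ℝ) → ℂ) : ℝ :=
  ∑ j : Fin N, ∫ x in cube d N, ‖Qop d N j Ψ x‖ ^ 2

/-- The second moment `⟨𝒩₊²⟩_Ψ` of the number of excited particles. -/
def NplusSqExp (d N : ℕ) (Ψ : (Fin N → Fin d → ℝ) → ℂ) : ℝ :=
  ∑ j : Fin N, ∑ k : Fin N, ∫ x in cube d N, ‖Qop d N j (Qop d N k Ψ) x‖ ^ 2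

/-!
Expanding in a Fourier series in the variable of one particle, the Laplacian on the mean-zero
functions is at least `(2π)²`, because a nonzero `p ∈ (2πℤ)^d` has `|p| ≥ 2π`. Hence the kinetic
energy dominates `(2π)² ⟨𝒩₊⟩`. On the other hand, `ŵ ≥ 0` gives pointwise
`∑_{j,k} w(x_j - x_k) = ∑_p ŵ(p) |∑_j e^{ip·x_j}|² ≥ N² ŵ(0)`, so that removing the `N`
diagonal terms bounds the pair interaction from below by `(N² ŵ(0) - N w(0)) / 2`. An energy of at
most `(λ/2) N (N-1) ŵ(0)` therefore leaves at most `(λ/2) N (w(0) - ŵ(0))` for the kinetic energy.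
-/

open UnitAddTorus

theorem update_add_eq_add_single {ι : Type*} [DecidableEq ι] {M : ι → Type*}
    [∀ i, AddZeroClass (M i)] (x : ∀ i, M i) (j : ι) (y v : M j) :
    Function.update x j (y + v) = Function.update x j y + Pi.single j v := by
  rw [Pi.single, ← Function.update_add, add_zero]

theorem fderiv_comp_update {𝕜 E ι : Type*} [NontriviallyNormedField 𝕜] [NormedAddCommGroup E]
    [NormedSpace 𝕜 E] [Finite ι] [DecidableEq ι] {V : ι → Type*} [∀ i, NormedAddCommGroup (V i)]
    [∀ i, NormedSpace 𝕜 (V i)] {f : (∀ i, V i) → E} {x : ∀ i, V i} {j : ι} {y : V j}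
    (hf : DifferentiableAt 𝕜 f (Function.update x j y)) (v : V j) :
    fderiv 𝕜 (fun z ↦ f (Function.update x j z)) y v =
      fderiv 𝕜 f (Function.update x j y) (Pi.single j v) := by
  have := Fintype.ofFinite ι
  have hcomp : HasFDerivAt (fun z ↦ f (Function.update x j z)) _ y :=
    hf.hasFDerivAt.comp y (hasFDerivAt_update x y)
  rw [hcomp.fderiv, ContinuousLinearMap.comp_apply]
  congr 1
  ext i
  rcases eq_or_ne i j with rfl | h
  · simp
  · simp [h]

theorem continuous_norm_fderiv_sq {E F : Type*} [NormedAddCommGroup E] [NormedSpace ℝ E]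
    [NormedAddCommGroup F] [NormedSpace ℝ F] {f : E → F} (hf : ContDiff ℝ 1 f) (v : E) :
    Continuous fun x ↦ ‖fderiv ℝ f x v‖ ^ 2 :=
  ((hf.continuous_fderiv one_ne_zero).clm_apply continuous_const).norm.pow 2

theorem continuous_setIntegral_update {ι E : Type*} [Finite ι] [DecidableEq ι] {α : ι → Type*}
    [∀ i, TopologicalSpace (α i)] [∀ i, FirstCountableTopology (α i)]
    [∀ i, LocallyCompactSpace (α i)] [NormedAddCommGroup E] [NormedSpace ℝ E] {j : ι}
    [MeasurableSpace (α j)] [OpensMeasurableSpace (α j)] [SecondCountableTopologyEither (α j) E]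
    {μ : Measure (α j)} [IsFiniteMeasureOnCompacts μ] {s : Set (α j)} (hs : IsCompact s)
    {F : (∀ i, α i) → E} (hF : Continuous F) :
    Continuous fun x ↦ ∫ y in s, F (Function.update x j y) ∂μ :=
  continuous_parametric_integral_of_continuous (f := fun x y ↦ F (Function.update x j y))
    (hF.comp (continuous_fst.update j continuous_snd)) hs

section ProductMeasure

variable {ι : Type*} [Fintype ι]

theorem restrict_Icc_pi {α : ι → Type*} [∀ i, Preorder (α i)] [∀ i, MeasureSpace (α i)]
    [∀ i, SigmaFinite (volume : Measure (α i))] (a b : ∀ i, α i) :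
    volume.restrict (Set.Icc a b) =
      Measure.pi fun i ↦ (volume : Measure (α i)).restrict (Set.Icc (a i) (b i)) := by
  rw [← Measure.restrict_pi_pi, Set.pi_univ_Icc, volume_pi]

variable [DecidableEq ι] {E : Type*} [NormedAddCommGroup E] [NormedSpace ℝ E]

theorem measurePreserving_update {X : ι → Type*} [∀ i, MeasurableSpace (X i)]
    (μ : ∀ i, Measure (X i)) [∀ i, SigmaFinite (μ i)] (j : ι) [IsProbabilityMeasure (μ j)] :
    MeasurePreserving (fun p : (∀ i, X i) × X j ↦ Function.update p.1 j p.2)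
      ((Measure.pi μ).prod (μ j)) (Measure.pi μ) := by
  have hmeas : Measurable fun p : (∀ i, X i) × X j ↦ Function.update p.1 j p.2 :=
    measurable_update'
  refine ⟨hmeas, (Measure.pi_eq fun s hs ↦ ?_).symm⟩
  have hpre : (fun p : (∀ i, X i) × X j ↦ Function.update p.1 j p.2) ⁻¹' Set.univ.pi s =
      Set.univ.pi (Function.update s j Set.univ) ×ˢ s j := by
    ext ⟨x, y⟩
    simp only [Set.mem_preimage, Set.mem_prod, Set.mem_univ_pi]
    rw [Function.forall_update_iff x fun i z ↦ z ∈ s i,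
      Function.forall_update_iff s fun i t ↦ x i ∈ t]
    simp [and_comm]
  rw [Measure.map_apply hmeas (MeasurableSet.univ_pi hs), hpre, Measure.prod_prod, Measure.pi_pi,
    ← Finset.prod_erase_mul _ _ (Finset.mem_univ j),
    ← Finset.prod_erase_mul Finset.univ (fun i ↦ μ i (s i)) (Finset.mem_univ j),
    Function.update_self, measure_univ, mul_one]
  congr 1
  refine Finset.prod_congr rfl fun i hi ↦ ?_
  rw [Function.update_of_ne (Finset.ne_of_mem_erase hi)]

theorem integral_integral_update {X : ι → Type*} [∀ i, MeasurableSpace (X i)]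
    {μ : ∀ i, Measure (X i)} [∀ i, SigmaFinite (μ i)] (j : ι) [IsProbabilityMeasure (μ j)]
    {F : (∀ i, X i) → E} (hF : Integrable F (Measure.pi μ)) :
    ∫ x, ∫ y, F (Function.update x j y) ∂μ j ∂Measure.pi μ = ∫ x, F x ∂Measure.pi μ := by
  have hmp := measurePreserving_update μ j
  calc ∫ x, ∫ y, F (Function.update x j y) ∂μ j ∂Measure.pi μ
      = ∫ p : (∀ i, X i) × X j, F (Function.update p.1 j p.2) ∂(Measure.pi μ).prod (μ j) :=
        (integral_prod _ ((hmp.integrable_comp hF.aestronglyMeasurable).2 hF)).symm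
    _ = ∫ x, F x ∂(((Measure.pi μ).prod (μ j)).map fun p ↦ Function.update p.1 j p.2) :=
        (integral_map hmp.aemeasurable (hmp.map_eq.symm ▸ hF.aestronglyMeasurable)).symm
    _ = ∫ x, F x ∂Measure.pi μ := by rw [hmp.map_eq]

theorem setIntegral_Icc_setIntegral_Icc_update {α : ι → Type*} [∀ i, Preorder (α i)]
    [∀ i, MeasureSpace (α i)] [∀ i, SigmaFinite (volume : Measure (α i))] {a b : ∀ i, α i}
    {j : ι} (hj : volume (Set.Icc (a j) (b j)) = 1) {F : (∀ i, α i) → E}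
    (hF : IntegrableOn F (Set.Icc a b)) :
    ∫ x in Set.Icc a b, ∫ y in Set.Icc (a j) (b j), F (Function.update x j y) =
      ∫ x in Set.Icc a b, F x := by
  have : IsProbabilityMeasure ((volume : Measure (α j)).restrict (Set.Icc (a j) (b j))) :=
    ⟨by rw [Measure.restrict_apply_univ, hj]⟩
  rw [IntegrableOn, restrict_Icc_pi] at hF
  rw [restrict_Icc_pi]
  exact integral_integral_update j hF

end ProductMeasure

section Torus

-- Mathlib's Fourier series on the torus refer to this Haar measure, which is not definitionally
-- the default volume on `AddCircle 1`.
attribute [local instance] instMeasureSpaceUnitAddCircle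

variable {ι : Type*}

/-- The measurable section `(ℝ/ℤ)^ι → (0,1]^ι` of the covering `ℝ^ι → (ℝ/ℤ)^ι`. It identifies
functions on the unit cube with functions on the torus, where Fourier series live. -/
def torusSection (t : UnitAddTorus ι) : ι → ℝ := fun i ↦ AddCircle.equivIoc 1 0 (t i)

theorem coe_torusSection (t : UnitAddTorus ι) : (fun i ↦ (torusSection t i : UnitAddCircle)) = t :=
  funext fun _ ↦ AddCircle.coe_equivIoc

theorem measurableEmbedding_torusSection [Countable ι] :
    MeasurableEmbedding (torusSection (ι := ι)) :=
  (MeasurableEmbedding.subtype_coe (MeasurableSet.univ_pi' fun _ ↦ measurableSet_Ioc)).comp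
    (measurableEquivPiIoc (0 : ι → ℝ)).measurableEmbedding

variable [Fintype ι]

theorem measurePreserving_torusSection :
    MeasurePreserving (torusSection (ι := ι)) volume (volume.restrict (Set.Icc 0 1)) := by
  have hIoc : volume.restrict {x : ι → ℝ | ∀ i, x i ∈ Set.Ioc (0 : ℝ) (0 + 1)} =
      volume.restrict (Set.Icc 0 1) := by
    refine Measure.restrict_congr_set ?_
    simpa [Set.pi, volume_pi, Pi.zero_def, Pi.one_def] using
      Measure.univ_pi_Ioc_ae_eq_Icc (μ := fun _ : ι ↦ (volume : Measure ℝ)) (f := 0) (g := 1)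
  rw [← hIoc]
  exact (measurePreserving_subtype_coe (MeasurableSet.univ_pi' fun _ ↦ measurableSet_Ioc)).comp
    (measurePreserving_equivPiIoc (0 : ι → ℝ))

/-- The Fourier coefficient `∫_{[0,1]^ι} e^{-2πi k·x} f(x) dx` of a function on the unit cube. -/
def cubeFourierCoeff (f : (ι → ℝ) → ℂ) (k : ι → ℤ) : ℂ :=
  ∫ x in Set.Icc 0 1, mFourier (-k) (fun i ↦ (x i : UnitAddCircle)) * f x

theorem mFourierCoeff_comp_torusSection (f : (ι → ℝ) → ℂ) (k : ι → ℤ) :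
    mFourierCoeff (f ∘ torusSection) k = cubeFourierCoeff f k := by
  rw [cubeFourierCoeff, ← measurePreserving_torusSection.integral_comp
    measurableEmbedding_torusSection]
  simp only [coe_torusSection, mFourierCoeff, Function.comp_apply, smul_eq_mul]

theorem hasSum_sq_cubeFourierCoeff {f : (ι → ℝ) → ℂ}
    (hf : MemLp f 2 (volume.restrict (Set.Icc 0 1))) :
    HasSum (fun k ↦ ‖cubeFourierCoeff f k‖ ^ 2) (∫ x in Set.Icc 0 1, ‖f x‖ ^ 2) := by
  have hF : MemLp (f ∘ torusSection) 2 volume :=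
    hf.comp_measurePreserving measurePreserving_torusSection
  have hcoeff (k : ι → ℤ) : mFourierCoeff (hF.toLp) k = cubeFourierCoeff f k := by
    rw [← mFourierCoeff_comp_torusSection]
    exact integral_congr_ae (hF.coeFn_toLp.mono fun t ht ↦ by simp only [ht])
  have hnorm : ∫ t, ‖hF.toLp (f ∘ torusSection) t‖ ^ 2 = ∫ x in Set.Icc 0 1, ‖f x‖ ^ 2 := by
    rw [← measurePreserving_torusSection.integral_comp measurableEmbedding_torusSection]
    exact integral_congr_ae (hF.coeFn_toLp.mono fun t ht ↦ by simp only [ht, Function.comp_apply])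
  simpa only [hcoeff, hnorm] using hasSum_sq_mFourierCoeff (hF.toLp (f ∘ torusSection))

theorem cubeFourierCoeff_zero (f : (ι → ℝ) → ℂ) :
    cubeFourierCoeff f 0 = ∫ x in Set.Icc 0 1, f x := by
  simp [cubeFourierCoeff, mFourier_zero]

theorem mFourier_coe_eq_exp (k : ι → ℤ) (x : ι → ℝ) :
    mFourier k (fun i ↦ (x i : UnitAddCircle)) =
      Complex.exp (∑ i, 2 * π * Complex.I * k i * x i) := by
  simp [mFourier, ← Complex.exp_sum]

theorem hasFDerivAt_mFourier_coe (k : ι → ℤ) (x : ι → ℝ) :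
    HasFDerivAt (fun y : ι → ℝ ↦ mFourier k (fun i ↦ (y i : UnitAddCircle)))
      (mFourier k (fun i ↦ (x i : UnitAddCircle)) • ∑ i, (2 * π * Complex.I * k i) •
        Complex.ofRealCLM.comp (ContinuousLinearMap.proj (R := ℝ) (φ := fun _ : ι ↦ ℝ) i)) x := by
  simp only [mFourier_coe_eq_exp]
  exact (HasFDerivAt.fun_sum fun i _ ↦ (Complex.ofRealCLM.comp
    (ContinuousLinearMap.proj (R := ℝ) (φ := fun _ : ι ↦ ℝ) i)).hasFDerivAt.const_mul _).cexp

theorem contDiff_mFourier_coe (k : ι → ℤ) :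
    ContDiff ℝ 1 fun y : ι → ℝ ↦ mFourier k (fun i ↦ (y i : UnitAddCircle)) := by
  simp only [mFourier_coe_eq_exp]
  exact (ContDiff.sum fun i _ ↦
    contDiff_const.mul (Complex.ofRealCLM.contDiff.comp (contDiff_apply ℝ ℝ i))).cexp

theorem one_le_sum_sq_of_ne_zero {k : ι → ℤ} (hk : k ≠ 0) : 1 ≤ ∑ i, k i ^ 2 := by
  obtain ⟨i, hi⟩ := Function.ne_iff.1 hk
  calc 1 ≤ k i ^ 2 := (one_le_sq_iff_one_le_abs _).2 (Int.one_le_abs hi)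
    _ ≤ ∑ i, k i ^ 2 :=
      Finset.single_le_sum (f := fun i ↦ k i ^ 2) (fun i _ ↦ sq_nonneg _) (Finset.mem_univ i)

variable [DecidableEq ι]

theorem integral_fderiv_single_eq_zero {E : Type*} [NormedAddCommGroup E] [NormedSpace ℝ E]
    [CompleteSpace E] {f : (ι → ℝ) → E} (hf : ContDiff ℝ 1 f) {i : ι}
    (hper : Function.Periodic f (Pi.single i 1)) :
    ∫ x in Set.Icc 0 1, fderiv ℝ f x (Pi.single i 1) = 0 := by
  have hcont : Continuous fun x ↦ fderiv ℝ f x (Pi.single i 1) :=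
    (hf.continuous_fderiv one_ne_zero).clm_apply continuous_const
  rw [← setIntegral_Icc_setIntegral_Icc_update (j := i) (by simp) hcont.integrableOn_Icc]
  refine integral_eq_zero_of_ae (.of_forall fun x ↦ ?_)
  have hderiv (t : ℝ) : HasDerivAt (fun s ↦ f (Function.update x i s))
      (fderiv ℝ f (Function.update x i t) (Pi.single i 1)) t :=
    (hf.differentiable one_ne_zero _).hasFDerivAt.comp_hasDerivAt t (hasDerivAt_update x i t)
  have hends : f (Function.update x i 1) = f (Function.update x i 0) := by
    rw [← hper (Function.update x i 0), ← update_add_eq_add_single, zero_add]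
  simp only [Pi.zero_apply, Pi.one_apply]
  rw [integral_Icc_eq_integral_Ioc, ← intervalIntegral.integral_of_le zero_le_one,
    intervalIntegral.integral_eq_sub_of_hasDerivAt (fun t _ ↦ hderiv t)
      ((hcont.comp (continuous_const.update i continuous_id)).intervalIntegrable _ _),
    hends, sub_self]

theorem periodic_mFourier_coe (k : ι → ℤ) (i : ι) :
    Function.Periodic (fun y : ι → ℝ ↦ mFourier k (fun i ↦ (y i : UnitAddCircle)))
      (Pi.single i 1) := by
  intro y
  refine congrArg _ (funext fun l ↦ ?_)
  rcases eq_or_ne l i with rfl | h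
  · simp only [Pi.add_apply, Pi.single_eq_same, AddCircle.coe_add, AddCircle.coe_period, add_zero]
  · simp only [Pi.add_apply, Pi.single_eq_of_ne h, add_zero]

theorem cubeFourierCoeff_fderiv_single {f : (ι → ℝ) → ℂ} (hf : ContDiff ℝ 1 f) {i : ι}
    (hper : Function.Periodic f (Pi.single i 1)) (k : ι → ℤ) :
    cubeFourierCoeff (fun x ↦ fderiv ℝ f x (Pi.single i 1)) k =
      2 * π * Complex.I * k i * cubeFourierCoeff f k := by
  set e : (ι → ℝ) → ℂ := fun x ↦ mFourier (-k) (fun i ↦ (x i : UnitAddCircle)) with he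
  have hesm : ContDiff ℝ 1 e := contDiff_mFourier_coe (-k)
  have hderiv (x : ι → ℝ) : fderiv ℝ (e * f) x (Pi.single i 1) =
      e x * fderiv ℝ f x (Pi.single i 1) - 2 * π * Complex.I * k i * (e x * f x) := by
    rw [((hasFDerivAt_mFourier_coe (-k) x).mul
      (hf.differentiable one_ne_zero x).hasFDerivAt).fderiv]
    simp only [Pi.neg_apply, Int.cast_neg, mul_neg, add_apply, smul_apply, smul_eq_mul, sum_apply,
      ContinuousLinearMap.comp_apply, ContinuousLinearMap.proj_apply, Pi.single_apply,
      Complex.ofRealCLM_apply, apply_ite Complex.ofReal, Complex.ofReal_one, Complex.ofReal_zero,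
      mul_ite, mul_one, mul_zero, Finset.sum_ite_eq', Finset.mem_univ, if_true, he]
    ring
  have hzero : ∫ x in Set.Icc 0 1, fderiv ℝ (e * f) x (Pi.single i 1) = 0 :=
    integral_fderiv_single_eq_zero (hesm.mul hf)
      ((periodic_mFourier_coe (-k) i).mul hper)
  have hint₁ : IntegrableOn (fun x ↦ e x * fderiv ℝ f x (Pi.single i 1)) (Set.Icc 0 1) :=
    (hesm.continuous.mul ((hf.continuous_fderiv one_ne_zero).clm_apply
      continuous_const)).integrableOn_Icc
  have hint₂ : IntegrableOn (fun x ↦ 2 * π * Complex.I * k i * (e x * f x)) (Set.Icc 0 1) :=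
    (continuous_const.mul (hesm.continuous.mul hf.continuous)).integrableOn_Icc
  simp only [hderiv] at hzero
  rw [integral_sub hint₁ hint₂, integral_const_mul] at hzero
  exact sub_eq_zero.1 hzero

theorem poincare_inequality_of_periodic_of_integral_eq_zero {f : (ι → ℝ) → ℂ} (hf : ContDiff ℝ 1 f)
    (hper : ∀ i, Function.Periodic f (Pi.single i 1)) (hmean : ∫ x in Set.Icc 0 1, f x = 0) :
    (2 * π) ^ 2 * ∫ x in Set.Icc 0 1, ‖f x‖ ^ 2 ≤
      ∑ i, ∫ x in Set.Icc 0 1, ‖fderiv ℝ f x (Pi.single i 1)‖ ^ 2 := by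
  have hparseval {g : (ι → ℝ) → ℂ} (hg : Continuous g) :
      HasSum (fun k ↦ ‖cubeFourierCoeff g k‖ ^ 2) (∫ x in Set.Icc 0 1, ‖g x‖ ^ 2) :=
    hasSum_sq_cubeFourierCoeff <| (memLp_two_iff_integrable_sq_norm hg.aestronglyMeasurable).2
      (hg.norm.pow 2).integrableOn_Icc
  have hcont (i : ι) : Continuous fun x ↦ fderiv ℝ f x (Pi.single i 1) :=
    (hf.continuous_fderiv one_ne_zero).clm_apply continuous_const
  refine hasSum_le (fun k ↦ ?_) ((hparseval hf.continuous).mul_left _)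
    (hasSum_sum fun i _ ↦ hparseval (hcont i))
  have hcoeff : ∑ i, ‖cubeFourierCoeff (fun x ↦ fderiv ℝ f x (Pi.single i 1)) k‖ ^ 2 =
      (2 * π) ^ 2 * ((∑ i, (k i : ℝ) ^ 2) * ‖cubeFourierCoeff f k‖ ^ 2) := by
    simp only [Finset.sum_mul, Finset.mul_sum]
    refine Finset.sum_congr rfl fun i _ ↦ ?_
    rw [cubeFourierCoeff_fderiv_single hf (hper i)]
    simp only [Complex.norm_mul, Complex.norm_ofNat, Complex.norm_real, norm_eq_abs,
      abs_of_pos pi_pos, Complex.norm_I, mul_one, Complex.norm_intCast, mul_pow, sq_abs]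
    ring
  rw [hcoeff]
  gcongr
  rcases eq_or_ne k 0 with rfl | hk
  · simp [cubeFourierCoeff_zero, hmean]
  · exact le_mul_of_one_le_left (sq_nonneg _) (mod_cast one_le_sum_sq_of_ne_zero hk)

theorem poincare_inequality_of_periodic {f : (ι → ℝ) → ℂ} (hf : ContDiff ℝ 1 f)
    (hper : ∀ i, Function.Periodic f (Pi.single i 1)) :
    (2 * π) ^ 2 * ∫ x in Set.Icc 0 1, ‖f x - ∫ y in Set.Icc 0 1, f y‖ ^ 2 ≤
      ∑ i, ∫ x in Set.Icc 0 1, ‖fderiv ℝ f x (Pi.single i 1)‖ ^ 2 := by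
  have hmean : ∫ x in Set.Icc 0 1, (f x - ∫ y in Set.Icc 0 1, f y) = 0 := by
    rw [integral_sub hf.continuous.integrableOn_Icc continuous_const.integrableOn_Icc]
    simp [Measure.real, Real.volume_Icc_pi]
  simpa only [fderiv_sub_const] using poincare_inequality_of_periodic_of_integral_eq_zero
    (hf.sub contDiff_const) (fun i x ↦ by rw [hper i]) hmean

end Torus

section Interaction

theorem sum_sum_cos_sub {ι : Type*} [Fintype ι] (θ : ι → ℝ) :
    ∑ j, ∑ k, cos (θ j - θ k) = (∑ j, cos (θ j)) ^ 2 + (∑ j, sin (θ j)) ^ 2 := by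
  simp only [cos_sub, Finset.sum_add_distrib, sq, Finset.sum_mul_sum]

theorem sum_sum_eq_two_mul_sum_lt_add {ι R : Type*} [Fintype ι] [LinearOrder ι] [Semiring R]
    {F : ι → ι → R} (hF : ∀ j k, F j k = F k j) :
    ∑ j, ∑ k, F j k = 2 * (∑ j, ∑ k, if j < k then F j k else 0) + ∑ j, F j j := by
  have hsplit (j k : ι) : F j k = (if j < k then F j k else 0) + (if k < j then F k j else 0) +
      if j = k then F j j else 0 := by
    rcases lt_trichotomy j k with h | rfl | h
    · simp [h, h.not_gt, h.ne]
    · simp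
    · simp [h, h.not_gt, h.ne', hF j k]
  calc ∑ j, ∑ k, F j k
      = (∑ j, ∑ k, if j < k then F j k else 0) + (∑ j, ∑ k, if k < j then F k j else 0) +
          ∑ j, F j j := by
        simp only [Finset.sum_congr rfl fun j _ ↦ Finset.sum_congr rfl fun k _ ↦ hsplit j k,
          Finset.sum_add_distrib, Finset.sum_ite_eq, Finset.mem_univ, if_true]
    _ = 2 * (∑ j, ∑ k, if j < k then F j k else 0) + ∑ j, F j j := by
        rw [Finset.sum_comm (f := fun j k ↦ if k < j then F k j else 0), two_mul]

variable {d : ℕ} {hw : (Fin d → ℤ) → ℝ}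

theorem hasSum_wOf (hw_summable : Summable hw) (x : Fin d → ℝ) :
    HasSum (fun k ↦ hw k * cos (∑ i, (2 * π * (k i : ℝ)) * x i)) (wOf d hw x) := by
  have hexp : Summable fun k : Fin d → ℤ ↦
      (hw k : ℂ) * Complex.exp (Complex.I * ((∑ i, (2 * π * (k i : ℝ)) * x i : ℝ) : ℂ)) := by
    refine .of_norm (hw_summable.norm.congr fun k ↦ ?_)
    rw [norm_mul, Complex.norm_exp_I_mul_ofReal, mul_one, Complex.norm_real]
  have hre := Complex.hasSum_re hexp.hasSum
  simpa only [wOf, Complex.re_ofReal_mul, mul_comm Complex.I, Complex.exp_ofReal_mul_I_re] using hre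

theorem wOf_neg (hw_summable : Summable hw) (x : Fin d → ℝ) : wOf d hw (-x) = wOf d hw x := by
  refine (hasSum_wOf hw_summable (-x)).unique ?_
  simpa only [Pi.neg_apply, mul_neg, Finset.sum_neg_distrib, cos_neg] using
    hasSum_wOf hw_summable x

theorem continuous_wOf (hw_summable : Summable hw) : Continuous (wOf d hw) := by
  have hseries : wOf d hw = fun x ↦ ∑' k, hw k * cos (∑ i, (2 * π * (k i : ℝ)) * x i) :=
    funext fun x ↦ (hasSum_wOf hw_summable x).tsum_eq.symm
  rw [hseries]
  refine continuous_tsum (fun k ↦ by fun_prop) hw_summable.norm fun k x ↦ ?_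
  rw [norm_mul]
  exact mul_le_of_le_one_right (norm_nonneg _) (abs_cos_le_one _)

-- Only the mode `p = 0` is kept of `∑ j, ∑ k, w (x j - x k) = ∑ p, ŵ p * ‖∑ j, e^{ip·x j}‖²`.
theorem card_sq_mul_le_sum_sum_wOf {ι : Type*} [Fintype ι] (hw_nonneg : ∀ k, 0 ≤ hw k)
    (hw_summable : Summable hw) (x : ι → Fin d → ℝ) :
    (Fintype.card ι : ℝ) ^ 2 * hw 0 ≤ ∑ j, ∑ k, wOf d hw (x j - x k) := by
  have hsum : HasSum (fun p ↦ hw p * ((∑ j, cos (∑ i, (2 * π * (p i : ℝ)) * x j i)) ^ 2 +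
      (∑ j, sin (∑ i, (2 * π * (p i : ℝ)) * x j i)) ^ 2)) (∑ j, ∑ k, wOf d hw (x j - x k)) := by
    simp only [← sum_sum_cos_sub, Finset.mul_sum, ← Finset.sum_sub_distrib, ← mul_sub]
    exact hasSum_sum fun j _ ↦ hasSum_sum fun k _ ↦ hasSum_wOf hw_summable (x j - x k)
  calc (Fintype.card ι : ℝ) ^ 2 * hw 0
      = hw 0 * ((∑ j, cos (∑ i, (2 * π * ((0 : Fin d → ℤ) i : ℝ)) * x j i)) ^ 2 +
          (∑ j, sin (∑ i, (2 * π * ((0 : Fin d → ℤ) i : ℝ)) * x j i)) ^ 2) := by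
        simp [mul_comm]
    _ ≤ ∑ j, ∑ k, wOf d hw (x j - x k) :=
        le_hasSum hsum 0 fun p _ ↦ mul_nonneg (hw_nonneg p) (by positivity)

/-- The pair interaction `∑_{j<k} w(x_j - x_k)` of `N` particles in `ℝ^d`. -/
def pairInteraction {d N : ℕ} (w : (Fin d → ℝ) → ℝ) (x : Fin N → Fin d → ℝ) : ℝ :=
  ∑ j, ∑ k, if j < k then w (x j - x k) else 0

theorem continuous_pairInteraction {N : ℕ} {w : (Fin d → ℝ) → ℝ} (hw : Continuous w) :
    Continuous (pairInteraction w (N := N)) := by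
  unfold pairInteraction
  refine continuous_finsetSum _ fun j _ ↦ continuous_finsetSum _ fun k _ ↦ ?_
  split_ifs <;> fun_prop

theorem le_pairInteraction_wOf (hw_nonneg : ∀ k, 0 ≤ hw k) (hw_summable : Summable hw) {N : ℕ}
    (x : Fin N → Fin d → ℝ) :
    ((N : ℝ) ^ 2 * hw 0 - N * wOf d hw 0) / 2 ≤ pairInteraction (wOf d hw) x := by
  have hsplit : ∑ j, ∑ k, wOf d hw (x j - x k) =
      2 * pairInteraction (wOf d hw) x + ∑ j, wOf d hw (x j - x j) :=
    sum_sum_eq_two_mul_sum_lt_add fun j k ↦ by rw [← wOf_neg hw_summable, neg_sub]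
  have hbound := card_sq_mul_le_sum_sum_wOf hw_nonneg hw_summable x
  simp only [sub_self, Finset.sum_const, Finset.card_univ, Fintype.card_fin, nsmul_eq_mul]
    at hsplit hbound
  linarith

end Interaction

section Particles

theorem cube_eq_Icc (d N : ℕ) : cube d N = Set.Icc 0 1 := by
  simp only [cube, Set.pi_univ_Icc]
  rfl

theorem cube1_eq_Icc (d : ℕ) : cube1 d = Set.Icc 0 1 :=
  Set.pi_univ_Icc _ _

variable {d N : ℕ} {Ψ : (Fin N → Fin d → ℝ) → ℂ}

/-- The kinetic energy `∑_j ∫ |∇_{x_j} Ψ|²` of a wave function on the unit cube. -/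
def kineticEnergy (Ψ : (Fin N → Fin d → ℝ) → ℂ) : ℝ :=
  ∑ j, ∑ i, ∫ x in cube d N, ‖fderiv ℝ Ψ x (Pi.single j (Pi.single i 1))‖ ^ 2

theorem energy_eq_kineticEnergy_add (hΨ : ContDiff ℝ 1 Ψ) {w : (Fin d → ℝ) → ℝ}
    (hw : Continuous w) (lam : ℝ) :
    energy d N lam w Ψ =
      kineticEnergy Ψ + lam * ∫ x in cube d N, pairInteraction w x * ‖Ψ x‖ ^ 2 := by
  have hkin (j : Fin N) (i : Fin d) :
      IntegrableOn (fun x ↦ ‖fderiv ℝ Ψ x (Pi.single j (Pi.single i 1))‖ ^ 2) (cube d N) :=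
    cube_eq_Icc d N ▸ (continuous_norm_fderiv_sq hΨ _).integrableOn_Icc
  have hint : IntegrableOn (fun x ↦ lam * (pairInteraction w x * ‖Ψ x‖ ^ 2)) (cube d N) :=
    cube_eq_Icc d N ▸ (continuous_const.mul ((continuous_pairInteraction hw).mul
      (hΨ.continuous.norm.pow 2))).integrableOn_Icc
  have hkin_sum (j : Fin N) := integrable_finsetSum Finset.univ fun i _ ↦ hkin j i
  calc energy d N lam w Ψ
      = ∫ x in cube d N, (∑ j, ∑ i, ‖fderiv ℝ Ψ x (Pi.single j (Pi.single i 1))‖ ^ 2) +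
          lam * (pairInteraction w x * ‖Ψ x‖ ^ 2) := by
        simp only [energy, pairInteraction, mul_assoc]
    _ = kineticEnergy Ψ + lam * ∫ x in cube d N, pairInteraction w x * ‖Ψ x‖ ^ 2 := by
        rw [integral_add (integrable_finsetSum _ fun j _ ↦ hkin_sum j) hint, integral_const_mul,
          integral_finsetSum _ fun j _ ↦ hkin_sum j]
        simp only [integral_finsetSum _ fun i _ ↦ hkin _ i, kineticEnergy]

theorem continuous_Qop (hΨ : Continuous Ψ) (j : Fin N) : Continuous (Qop d N j Ψ) := by
  unfold Qop
  rw [cube1_eq_Icc]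
  exact hΨ.sub (continuous_setIntegral_update isCompact_Icc hΨ)

theorem mul_integral_norm_Qop_sq_le (hΨ : ContDiff ℝ 1 Ψ) {j : Fin N}
    (hper : ∀ i, Function.Periodic Ψ (Pi.single j (Pi.single i 1))) :
    (2 * π) ^ 2 * ∫ x in cube d N, ‖Qop d N j Ψ x‖ ^ 2 ≤
      ∑ i, ∫ x in cube d N, ‖fderiv ℝ Ψ x (Pi.single j (Pi.single i 1))‖ ^ 2 := by
  have hvol : volume (Set.Icc ((0 : Fin N → Fin d → ℝ) j) ((1 : Fin N → Fin d → ℝ) j)) = 1 := by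
    simp only [Real.volume_Icc_pi, Pi.zero_apply, Pi.one_apply, sub_zero, ENNReal.ofReal_one,
      Finset.prod_const_one]
  have hfibre {F : (Fin N → Fin d → ℝ) → ℝ} (hF : Continuous F) :
      ∫ x in Set.Icc 0 1, ∫ y in Set.Icc 0 1, F (Function.update x j y) =
        ∫ x in Set.Icc 0 1, F x :=
    setIntegral_Icc_setIntegral_Icc_update hvol hF.integrableOn_Icc
  have hint {F : (Fin N → Fin d → ℝ) → ℝ} (hF : Continuous F) :
      IntegrableOn (fun x ↦ ∫ y in Set.Icc 0 1, F (Function.update x j y)) (Set.Icc 0 1) :=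
    (continuous_setIntegral_update isCompact_Icc hF).integrableOn_Icc
  have hQ : Continuous fun x ↦ ‖Qop d N j Ψ x‖ ^ 2 := (continuous_Qop hΨ.continuous j).norm.pow 2
  have hD (i : Fin d) := continuous_norm_fderiv_sq hΨ (Pi.single j (Pi.single i 1))
  simp only [cube_eq_Icc, ← hfibre hQ, ← hfibre (hD _)]
  rw [← integral_const_mul, ← integral_finsetSum _ fun i _ ↦ hint (hD i)]
  refine integral_mono ((hint hQ).const_mul _) (integrable_finsetSum _ fun i _ ↦ hint (hD i))
    fun x ↦ ?_
  have hslice : ContDiff ℝ 1 fun y ↦ Ψ (Function.update x j y) := hΨ.comp (contDiff_update 1 x j)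
  have hslice_per (i : Fin d) :
      Function.Periodic (fun y ↦ Ψ (Function.update x j y)) (Pi.single i 1) := fun y ↦ by
    simp only [update_add_eq_add_single, hper i (Function.update x j y)]
  simpa only [Qop, cube1_eq_Icc, Function.update_idem,
    fderiv_comp_update (hΨ.differentiable one_ne_zero _)] using
    poincare_inequality_of_periodic hslice hslice_per

theorem mul_NplusExp_le_kineticEnergy (hΨ : ContDiff ℝ 1 Ψ)
    (hper : ∀ j i, Function.Periodic Ψ (Pi.single j (Pi.single i 1))) :
    (2 * π) ^ 2 * NplusExp d N Ψ ≤ kineticEnergy Ψ := by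
  rw [NplusExp, Finset.mul_sum]
  exact Finset.sum_le_sum fun j _ ↦ mul_integral_norm_Qop_sq_le hΨ (hper j)

theorem le_integral_pairInteraction_wOf {hw : (Fin d → ℤ) → ℝ} (hw_nonneg : ∀ k, 0 ≤ hw k)
    (hw_summable : Summable hw) (hΨ : Continuous Ψ) :
    ((N : ℝ) ^ 2 * hw 0 - N * wOf d hw 0) / 2 * ∫ x in cube d N, ‖Ψ x‖ ^ 2 ≤
      ∫ x in cube d N, pairInteraction (wOf d hw) x * ‖Ψ x‖ ^ 2 := by
  rw [cube_eq_Icc, ← integral_const_mul]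
  refine integral_mono (continuous_const.mul (hΨ.norm.pow 2)).integrableOn_Icc
    ((continuous_pairInteraction (continuous_wOf hw_summable)).mul
      (hΨ.norm.pow 2)).integrableOn_Icc fun x ↦ ?_
  exact mul_le_mul_of_nonneg_right (le_pairInteraction_wOf hw_nonneg hw_summable x) (by positivity)

theorem IsAdmissible.periodic (hΨ : IsAdmissible d N Ψ) (j : Fin N) (i : Fin d) :
    Function.Periodic Ψ (Pi.single j (Pi.single i 1)) := fun x ↦ by
  have hshift : x + Pi.single j (Pi.single i 1) =
      Function.update x j (x j + fun l ↦ ((Pi.single i 1 : Fin d → ℤ) l : ℝ)) := by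
    rw [update_add_eq_add_single, Function.update_eq_self]
    congr 2
    ext l
    simp [Pi.single_apply]
  rw [hshift, hΨ.2.1]

theorem excited_particles_apriori_bound_general {hw : (Fin d → ℤ) → ℝ}
    (hw_nonneg : ∀ k, 0 ≤ hw k) (hw_summable : Summable hw) {lam : ℝ} (hlam : 0 ≤ lam)
    (hΨ : ContDiff ℝ 1 Ψ) (hper : ∀ j i, Function.Periodic Ψ (Pi.single j (Pi.single i 1)))
    (hnorm : ∫ x in cube d N, ‖Ψ x‖ ^ 2 = 1)
    (henergy : energy d N lam (wOf d hw) Ψ ≤ lam / 2 * (N : ℝ) * ((N : ℝ) - 1) * hw 0) :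
    NplusExp d N Ψ ≤ lam * (N : ℝ) * (wOf d hw 0 - hw 0) / (2 * (2 * π) ^ 2) := by
  have hkin := mul_NplusExp_le_kineticEnergy hΨ hper
  have hpot := mul_le_mul_of_nonneg_left
    (le_integral_pairInteraction_wOf hw_nonneg hw_summable hΨ.continuous) hlam
  rw [hnorm, mul_one] at hpot
  rw [energy_eq_kineticEnergy_add hΨ (continuous_wOf hw_summable)] at henergy
  rw [le_div_iff₀ (by positivity)]
  linarith

end Particles

/-- **A priori bound on the number of excited particles.** If an admissible `Ψ` has energy
at most `(λ/2) N (N-1) ŵ(0)`, then `⟨𝒩₊⟩_Ψ ≤ λ N (w(0) - ŵ(0)) / (2 (2π)²)`. -/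
theorem excited_particles_apriori_bound (d : ℕ) (hd : 1 ≤ d)
    (hw : (Fin d → ℤ) → ℝ) (hw_nonneg : ∀ k, 0 ≤ hw k)
    (hw_even : ∀ k, hw (-k) = hw k) (hw_summable : Summable hw)
    (N : ℕ) (hN : 2 ≤ N) (lam : ℝ) (hlam : 0 < lam)
    (Ψ : (Fin N → Fin d → ℝ) → ℂ) (hΨ : IsAdmissible d N Ψ)
    (henergy : energy d N lam (wOf d hw) Ψ ≤ lam / 2 * (N : ℝ) * ((N : ℝ) - 1) * hw 0) :
    NplusExp d N Ψ ≤ lam * (N : ℝ) * (wOf d hw 0 - hw 0) / (2 * (2 * π) ^ 2) :=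
  excited_particles_apriori_bound_general hw_nonneg hw_summable hlam.le
    (hΨ.1.of_le (mod_cast le_top)) hΨ.periodic hΨ.2.2.2 henergy
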